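/- arXiv:1902.05671 — 2 statements merged into one kernel-verified Lean document; each statement's English description precedes it below -/
import Mathlib

section
/- Let k ≥ 2, n ≥ 1, κ̄ = ⌈k/2⌉, L̄ = I_n ⊗ L_A^{(k)}, and 𝓛 = L̄ + Σ_{i=1}^{n−1} z_i z_iᵀ with z_i = e_{ik} − e_{ik+κ̄}. Then for every j ∈ {1, 2, …, k−1}: λ_{nj}(𝓛) < λ_{nj+1}(𝓛) = λ_{nj+1}(L̄), and this common value equals the (j+1)-th smallest eigenvalue of L_A^{(k)}. -/
/-!
Write `t = μ j`. The spectrum of `L̄` is `n` copies of that of the antiregular Laplacian, so at most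
`n j` eigenvalues of `L̄` are `< t` and at least `n (j + 1)` are `≤ t`. It suffices to show that `𝓛`
has exactly `n j` eigenvalues `< t` and at least `n j + 1` eigenvalues `≤ t`.

Since `𝓛 - L̄` is positive semidefinite of rank at most `n - 1`, comparing quadratic forms on
subspaces gives at most `n j` eigenvalues `< t` and at least `n j + 1` eigenvalues `≤ t`
(`countP_lt_inter_le_countP_lt_copies`, `countP_le_copies_le_countP_le_inter`). Each comparison is a
dimension count: with fewer linear conditions than the dimension, a nonzero vector satisfies all of
them, and the two forms disagree on it.

For the missing strict bound, consider a vector in the span of the eigenvectors of `L̄` with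
eigenvalue `≤ t` that is orthogonal to all `z_p` and on which the form of `𝓛`, here equal to that of
`L̄`, reaches `t`. It is an eigenvector of `L̄`, so its restriction to each copy is a
`t`-eigenvector of the antiregular Laplacian or zero. The key fact is that an eigenvector of the
antiregular Laplacian never vanishes at vertex `⌈k/2⌉` (`antireg_eigenvector_eq_zero`). Through
the relations `z_p ⬝ᵥ x = 0` it follows that such a vector is determined by its entry at vertex
`⌈k/2⌉` of the first copy; one further linear condition removes all of them.

The key fact is proved from a recursion between the mirror entries `w i` and `w (k - 1 - i)` of an
eigenvector: zeros spread from the middle outwards, and whenever a coefficient degenerates, the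
remaining outer entries are constant and equal to the boundary value `0`.
-/

/-- Laplacian matrix of the `k`-vertex antiregular graph (0-indexed vertices;
1-indexed vertices `i+1`, `j+1` adjacent iff `(i+1)+(j+1) ≤ k+1`). -/
def antiregLap (k : ℕ) : Matrix (Fin k) (Fin k) ℝ :=
  Matrix.of fun i j =>
    if i = j then
      ((Finset.univ.filter fun m : Fin k => m ≠ i ∧ i.val + m.val + 2 ≤ k + 1).card : ℝ)
    else if i.val + j.val + 2 ≤ k + 1 then -1 else 0

/-- The vector `z_i = e_{ik} - e_{ik+κ̄}` (1-indexed, `κ̄ = ⌈k/2⌉`, `i = p+1`),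
on the product index set: copy `p`, vertex `k` minus copy `p+1`, vertex `κ̄`. -/
def zvec (n k : ℕ) (hk : 2 ≤ k) (p : Fin (n - 1)) : Fin n × Fin k → ℝ :=
  fun q =>
    (if q = (⟨p.val, by have := p.isLt; omega⟩, ⟨k - 1, by omega⟩) then (1 : ℝ) else 0) -
    (if q = (⟨p.val + 1, by have := p.isLt; omega⟩, ⟨(k + 1) / 2 - 1, by omega⟩) then 1 else 0)

/-- `L̄ = I_n ⊗ L_A^{(k)}`, the Laplacian of `n` disjoint copies of the
`k`-vertex antiregular graph, indexed by (copy, vertex). -/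
def copiesLap (n k : ℕ) : Matrix (Fin n × Fin k) (Fin n × Fin k) ℝ :=
  Matrix.kroneckerMap (· * ·) (1 : Matrix (Fin n) (Fin n) ℝ) (antiregLap k)

/-- `𝓛 = I_n ⊗ L_A^{(k)} + Σ_{i=1}^{n-1} z_i z_iᵀ`, the Laplacian of `n`
interconnected copies of the `k`-vertex antiregular graph. -/
def interLap (n k : ℕ) (hk : 2 ≤ k) : Matrix (Fin n × Fin k) (Fin n × Fin k) ℝ :=
  copiesLap n k + ∑ p : Fin (n - 1), Matrix.vecMulVec (zvec n k hk p) (zvec n k hk p)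


/-! ### Eigenvectors of the antiregular Laplacian -/

/-- Outward propagation. If the two mirror entries `w i`, `w (k - i)` agree and `i ≤ t ≤ k - i`, the
recursion keeps `w` constant outside `[i, k - i]`, up to `w k = 0`; so both entries vanish. -/
theorem const_outside {k : ℕ} {w : ℕ → ℝ} {t : ℝ} (hk : w k = 0)
    (h : ∀ i i', i + i' + 1 = k → ((i' : ℝ) - t) * (w i - w (i + 1)) = w i' - w i) :
    ∀ i j : ℕ, i + j = k → w i = w j → (i : ℝ) ≤ t → t ≤ j → w i = 0 := by
  intro i
  induction i with
  | zero =>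
    intro j hj hw _ _
    rw [hw, show j = k by omega, hk]
  | succ i ih =>
    intro j hj hw h1 h2
    have e1 := h i j (by omega)
    have e2 := h j i (by omega)
    push_cast at h1
    have a1 : w i = w (i + 1) := by
      have : ((j : ℝ) + 1 - t) * (w i - w (i + 1)) = 0 := by rw [hw] at e1 ⊢; linarith
      rcases mul_eq_zero.1 this with h | h <;> linarith
    have a2 : w i = w (j + 1) := by
      have : ((i : ℝ) - t) * (w j - w (j + 1)) = 0 := by rw [e2, a1, hw]; ring
      rcases mul_eq_zero.1 this with h | h <;> linarith
    rw [← a1]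
    exact ih (j + 1) (by omega) a2 (by linarith) (by push_cast; linarith)

/-- Widening a zero window `[i, j]` upwards: the recursion gives `(i - t) w (j + 1) = 0`, and in the
degenerate case `t = i` the entries beyond the window are constant, so `const_outside` applies. -/
theorem eq_zero_above_of_eq_zero {k : ℕ} {w : ℕ → ℝ} {t : ℝ} (hk : w k = 0)
    (h : ∀ i i', i + i' + 1 = k → ((i' : ℝ) - t) * (w i - w (i + 1)) = w i' - w i)
    (i j : ℕ) (hij : i + j + 1 = k) (hle : i ≤ j) (hi : w i = 0) (hj : w j = 0) :
    w (j + 1) = 0 := by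
  have hle' : (i : ℝ) ≤ j := by exact_mod_cast hle
  have e := h j i (by omega)
  rw [hi, hj] at e
  have : ((i : ℝ) - t) * w (j + 1) = 0 := by linarith
  rcases mul_eq_zero.1 this with ht | ht
  · rcases i with _ | i
    · rw [show j + 1 = k by omega, hk]
    · have e1 := h i (j + 1) (by omega)
      have e2 := h (j + 1) i (by omega)
      push_cast at *
      obtain rfl : t = i + 1 := by linarith
      have a : w i = w (j + 1 + 1) := by linarith
      have := const_outside hk h i (j + 1 + 1) (by omega) a (by linarith) (by push_cast; linarith)
      rw [hi, this] at e1
      linarith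
  · exact ht

/-- For `t = j + 1` the coefficient `j + 1 - t` of the recursion vanishes, so the entries `i - 1`,
`j + 1` and `j + 2` agree, and they are zero by `const_outside`. -/
theorem eq_zero_above_of_eq {k : ℕ} {w : ℕ → ℝ} {t : ℝ} (hk : w k = 0)
    (h : ∀ i i', i + i' + 1 = k → ((i' : ℝ) - t) * (w i - w (i + 1)) = w i' - w i)
    (i j : ℕ) (hij : i + j + 1 = k) (hle : i ≤ j) (ht : t = j + 1) : w (j + 1) = 0 := by
  have hle' : (i : ℝ) ≤ j := by exact_mod_cast hle
  rcases i with _ | i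
  · rw [show j + 1 = k by omega, hk]
  · have e1 := h i (j + 1) (by omega)
    have e2 := h (j + 1) i (by omega)
    push_cast at *
    subst ht
    have a : w i = w (j + 1) := by linarith
    have : ((i : ℝ) - (j + 1)) * (w (j + 1) - w (j + 1 + 1)) = 0 := by rw [e2, a]; ring
    have b : w i = w (j + 1 + 1) := by
      rcases mul_eq_zero.1 this with h | h <;> linarith
    rw [← a]
    exact const_outside hk h i (j + 1 + 1) (by omega) b (by linarith) (by push_cast; linarith)

/-- A solution of the recursion which vanishes at the middle index `m = ⌈k/2⌉ - 1` vanishes on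
every symmetric window `[i, k - i]` with `i ≤ m`; induction on the distance `d = m - i`. -/
theorem eq_zero_on_window {k m : ℕ} {w : ℕ → ℝ} {t : ℝ} (hm : m + 1 = (k + 1) / 2) (hk : w k = 0)
    (h : ∀ i i', i + i' + 1 = k → ((i' : ℝ) - t) * (w i - w (i + 1)) = w i' - w i)
    (hwm : w m = 0) :
    ∀ d i, i + d = m → ∀ l, i ≤ l → l + i ≤ k → w l = 0 := by
  have hmid : ∀ j, m + j + 1 = k → w j = 0 := by
    intro j hj
    rcases (by omega : j = m ∨ j = m + 1) with rfl | rfl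
    · exact hwm
    · have e1 := h m (m + 1) hj
      have e2 := h (m + 1) m (by omega)
      push_cast at e1 e2
      rw [hwm] at e1 e2
      have : ((m : ℝ) + 2 - t) * w (m + 1) = 0 := by linarith
      rcases mul_eq_zero.1 this with h' | h'
      · have := eq_zero_above_of_eq hk h m (m + 1) hj (by omega) (by push_cast; linarith)
        rw [this] at e2
        obtain rfl : t = m + 2 := by linarith
        linarith
      · exact h'
  intro d
  induction d with
  | zero =>
    intro i hi l hl hlk
    obtain rfl : i = m := by omega
    have hj := hmid (k - 1 - i) (by omega)
    have := eq_zero_above_of_eq_zero hk h i (k - 1 - i) (by omega) (by omega) hwm hj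
    rcases (by omega : l = i ∨ l = k - 1 - i ∨ l = k - 1 - i + 1) with h | h | h <;> rw [h] <;>
      assumption
  | succ d ih =>
    intro i hi l hl hlk
    have z := ih (i + 1) (by omega)
    have z1 := z (i + 1) le_rfl (by omega)
    have z2 := z (k - 1 - i) (by omega) (by omega)
    have e1 := h i (k - 1 - i) (by omega)
    have e2 := h (k - 1 - i) i (by omega)
    rw [z1, z2] at e1
    have hwi : w i = 0 := by
      have : (((k - 1 - i : ℕ) : ℝ) + 1 - t) * w i = 0 := by linarith
      rcases mul_eq_zero.1 this with h' | h'
      · have := eq_zero_above_of_eq hk h i (k - 1 - i) (by omega) (by omega) (by linarith)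
        rw [this, z2] at e2
        linarith
      · exact h'
    have hwj := eq_zero_above_of_eq_zero hk h i (k - 1 - i) (by omega) (by omega) hwi z2
    by_cases h1 : l = i
    · rw [h1, hwi]
    by_cases h2 : l = k - 1 - i + 1
    · rw [h2, hwj]
    exact z l (by omega) (by omega)

theorem antiregLap_mulVec (k : ℕ) (v : Fin k → ℝ) (i : Fin k) :
    (antiregLap k).mulVec v i =
      ∑ j : Fin k, if i.val + j.val + 1 ≤ k then v i - v j else 0 := by
  have hd : ∀ j, antiregLap k i j * v j =
      (if i = j then (∑ m : Fin k, if m ≠ i ∧ i.val + m.val + 2 ≤ k + 1 then (1 : ℝ) else 0) * v i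
        else 0) + if i ≠ j ∧ i.val + j.val + 2 ≤ k + 1 then - v j else 0 := by
    intro j
    by_cases hij : i = j
    · subst hij; simp [antiregLap]
    · by_cases h2 : i.val + j.val + 2 ≤ k + 1 <;>
        simp only [antiregLap, Matrix.of_apply, hij, h2, ne_eq, not_false_eq_true, and_true,
          and_false, if_true, if_false, zero_add] <;> ring
  rw [Matrix.mulVec, dotProduct]
  simp_rw [hd]
  rw [Finset.sum_add_distrib, Finset.sum_ite_eq, if_pos (Finset.mem_univ _), Finset.sum_mul,
    ← Finset.sum_add_distrib]
  refine Finset.sum_congr rfl fun j _ => ?_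
  by_cases hij : i = j
  · subst hij; simp
  · have : j ≠ i := fun h => hij h.symm
    by_cases h2 : i.val + j.val + 1 ≤ k <;> simp [hij, this, h2]
    · ring

/-- The eigenvector equation at row `i` reads `(k - i - t) w i = ∑ j < k - i, w j`. Subtracting the
equations of two consecutive rows leaves a recursion linking the mirror indices `i` and
`i' = k - 1 - i`. Row `i = k - 1` is covered by the convention `w k = 0`. -/
theorem eig_rec {k : ℕ} {v : Fin k → ℝ} {t : ℝ} {w : ℕ → ℝ}
    (hw : ∀ i : Fin k, w i = v i) (hk : w k = 0)
    (hv : (antiregLap k).mulVec v = t • v) :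
    ∀ i i', i + i' + 1 = k → ((i' : ℝ) - t) * (w i - w (i + 1)) = w i' - w i := by
  have key : ∀ i i' : ℕ, i + i' = k → ((i' : ℝ) - t) * w i = ∑ j ∈ Finset.range i', w j := by
    intro i i' hi
    rcases Nat.eq_zero_or_pos i' with rfl | hpos
    · rw [show i = k by omega, hk]; simp
    have e := congrFun hv ⟨i, by omega⟩
    rw [antiregLap_mulVec] at e
    simp only [← hw, Pi.smul_apply, smul_eq_mul] at e
    rw [Fin.sum_univ_eq_sum_range (fun j => if i + j + 1 ≤ k then w i - w j else 0),
      ← Finset.sum_filter] at e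
    have : (Finset.range k).filter (fun j => i + j + 1 ≤ k) = Finset.range i' := by
      ext j; simp; omega
    rw [this, Finset.sum_sub_distrib, Finset.sum_const, Finset.card_range, nsmul_eq_mul] at e
    linarith
  intro i i' hi
  have e1 := key i (i' + 1) (by omega)
  have e2 := key (i + 1) i' (by omega)
  rw [Finset.sum_range_succ, ← e2] at e1
  push_cast at e1
  linarith

/-- No eigenvector of the antiregular Laplacian vanishes at the vertex `⌈k/2⌉` (1-indexed). -/
theorem antireg_eigenvector_eq_zero {k : ℕ} (hk : 2 ≤ k) {v : Fin k → ℝ} {t : ℝ}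
    (hv : (antiregLap k).mulVec v = t • v) (h0 : v ⟨(k + 1) / 2 - 1, by omega⟩ = 0) : v = 0 := by
  set w : ℕ → ℝ := fun i => if h : i < k then v ⟨i, h⟩ else 0 with hwdef
  have hw : ∀ i : Fin k, w i = v i := fun i => by simp [hwdef]
  have hwk : w k = 0 := by simp [hwdef]
  funext i
  rw [← hw]
  exact eq_zero_on_window (m := (k + 1) / 2 - 1) (by omega) hwk (eig_rec hw hwk hv)
    (by rw [← h0, ← hw]) _ 0 (Nat.zero_add _) i (Nat.zero_le _) i.isLt.le

/-! ### Quadratic forms, eigenvalue counts and sorted spectra -/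

/-- An orthogonal diagonalization of the real symmetric matrix `A`: eigenvalues `e`, and the map `c`
sending a vector to its coordinates in an orthonormal eigenbasis. Only the consequences used below
are recorded. -/
structure Diagonalization {ι : Type*} [Fintype ι] [DecidableEq ι] (A : Matrix ι ι ℝ) where
  e : ι → ℝ
  c : (ι → ℝ) →ₗ[ℝ] (ι → ℝ)
  roots_eq : A.charpoly.roots = Finset.univ.val.map e
  norm_eq : ∀ x, x ⬝ᵥ x = ∑ i, c x i ^ 2
  form_eq : ∀ x, x ⬝ᵥ A.mulVec x = ∑ i, e i * c x i ^ 2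
  eig : ∀ x t, (∀ i, e i ≠ t → c x i = 0) → A.mulVec x = t • x

theorem exists_diagonalization {ι : Type*} [Fintype ι] [DecidableEq ι] {A : Matrix ι ι ℝ}
    (hA : A.IsHermitian) : Nonempty (Diagonalization A) := by
  set U : Matrix ι ι ℝ := (hA.eigenvectorUnitary : Matrix ι ι ℝ) with hU
  have hUU : U * U.transpose = 1 := by
    have := Unitary.coe_mul_star_self hA.eigenvectorUnitary
    rwa [Unitary.coe_star, Matrix.star_eq_conjTranspose,
      Matrix.conjTranspose_eq_transpose_of_trivial] at this
  have hspec : A = U * Matrix.diagonal hA.eigenvalues * U.transpose := by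
    have := hA.spectral_theorem
    rw [Unitary.conjStarAlgAut_apply, Matrix.star_eq_conjTranspose,
      Matrix.conjTranspose_eq_transpose_of_trivial] at this
    exact this
  have hAx : ∀ x, A.mulVec x =
      U.mulVec ((Matrix.diagonal hA.eigenvalues).mulVec (U.transpose.mulVec x)) := by
    intro x
    conv_lhs => rw [hspec]
    rw [Matrix.mulVec_mulVec, Matrix.mulVec_mulVec]
  have hback : ∀ x, U.mulVec (U.transpose.mulVec x) = x := by
    intro x; rw [Matrix.mulVec_mulVec, hUU, Matrix.one_mulVec]
  have hdot : ∀ x y, x ⬝ᵥ U.mulVec y = U.transpose.mulVec x ⬝ᵥ y := by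
    intro x y; rw [Matrix.dotProduct_mulVec, Matrix.mulVec_transpose]
  refine ⟨⟨hA.eigenvalues, Matrix.mulVecLin U.transpose, ?_, ?_, ?_, ?_⟩⟩
  · rw [hA.roots_charpoly_eq_eigenvalues]; rfl
  · intro x
    conv_lhs => rw [← hback x, hdot, hback]
    exact Finset.sum_congr rfl fun i _ => (sq _).symm
  · intro x
    rw [hAx, hdot]
    refine Finset.sum_congr rfl fun i _ => ?_
    rw [Matrix.mulVec_diagonal, Matrix.mulVecLin_apply]; ring
  · intro x t h
    rw [hAx]
    have : (Matrix.diagonal hA.eigenvalues).mulVec (U.transpose.mulVec x)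
        = t • U.transpose.mulVec x := by
      funext i
      rw [Matrix.mulVec_diagonal, Pi.smul_apply, smul_eq_mul]
      by_cases hi : hA.eigenvalues i = t
      · rw [hi]
      · have := h i hi
        rw [Matrix.mulVecLin_apply] at this
        rw [this]; simp
    rw [this, Matrix.mulVec_smul, hback]

namespace Diagonalization

variable {ι : Type*} [Fintype ι] [DecidableEq ι] {A : Matrix ι ι ℝ} (D : Diagonalization A)

theorem form_sub (x : ι → ℝ) (t : ℝ) :
    x ⬝ᵥ A.mulVec x - t * (x ⬝ᵥ x) = ∑ i, (D.e i - t) * D.c x i ^ 2 := by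
  rw [D.form_eq, D.norm_eq, Finset.mul_sum, ← Finset.sum_sub_distrib]
  exact Finset.sum_congr rfl fun i _ => by ring

theorem form_le {x : ι → ℝ} {t : ℝ} (h : ∀ i, t < D.e i → D.c x i = 0) :
    x ⬝ᵥ A.mulVec x ≤ t * (x ⬝ᵥ x) := by
  rw [← sub_nonpos, D.form_sub]
  refine Finset.sum_nonpos fun i _ => ?_
  rcases lt_or_ge t (D.e i) with hi | hi
  · rw [h i hi]; simp
  · exact mul_nonpos_of_nonpos_of_nonneg (sub_nonpos.2 hi) (sq_nonneg _)

theorem le_form {x : ι → ℝ} {t : ℝ} (h : ∀ i, D.e i < t → D.c x i = 0) :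
    t * (x ⬝ᵥ x) ≤ x ⬝ᵥ A.mulVec x := by
  rw [← sub_nonneg, D.form_sub]
  refine Finset.sum_nonneg fun i _ => ?_
  rcases lt_or_ge (D.e i) t with hi | hi
  · rw [h i hi]; simp
  · exact mul_nonneg (sub_nonneg.2 hi) (sq_nonneg _)

/-- Equality case of `form_le`: a vector without components above `t` at which the form reaches `t`
is an eigenvector for `t`. -/
theorem eig_of_le_form {x : ι → ℝ} {t : ℝ} (h : ∀ i, t < D.e i → D.c x i = 0)
    (hx : t * (x ⬝ᵥ x) ≤ x ⬝ᵥ A.mulVec x) : A.mulVec x = t • x := by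
  have h0 := D.form_sub x t
  rw [sub_eq_zero.2 (le_antisymm (D.form_le h) hx)] at h0
  have hz := (Finset.sum_eq_zero_iff_of_nonpos (fun i _ => ?_)).1 h0.symm
  · refine D.eig x t fun i hi => ?_
    have := hz i (Finset.mem_univ i)
    rcases mul_eq_zero.1 this with h' | h'
    · exact absurd (sub_eq_zero.1 h') hi
    · exact pow_eq_zero_iff two_ne_zero |>.1 h'
  · rcases lt_or_ge t (D.e i) with hi | hi
    · rw [h i hi]; simp
    · exact mul_nonpos_of_nonpos_of_nonneg (sub_nonpos.2 hi) (sq_nonneg _)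

theorem exists_c_ne {x : ι → ℝ} (hx : x ≠ 0) : ∃ i, D.c x i ≠ 0 := by
  by_contra! h
  apply hx
  rw [← dotProduct_self_eq_zero, D.norm_eq]
  exact Finset.sum_eq_zero fun i _ => by rw [h i]; simp

theorem form_lt {x : ι → ℝ} {t : ℝ} (hx : x ≠ 0) (h : ∀ i, t ≤ D.e i → D.c x i = 0) :
    x ⬝ᵥ A.mulVec x < t * (x ⬝ᵥ x) := by
  rw [← sub_neg, D.form_sub]
  have key : ∀ i, D.c x i ≠ 0 → (D.e i - t) * D.c x i ^ 2 < 0 := fun i hi =>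
    mul_neg_of_neg_of_pos (sub_neg.2 (not_le.1 fun h' => hi (h i h'))) (by positivity)
  obtain ⟨i, hi⟩ := D.exists_c_ne hx
  refine Finset.sum_neg' (fun i _ => ?_) ⟨i, Finset.mem_univ i, key i hi⟩
  by_cases hc : D.c x i = 0
  · rw [hc]; simp
  · exact (key i hc).le

theorem lt_form {x : ι → ℝ} {t : ℝ} (hx : x ≠ 0) (h : ∀ i, D.e i ≤ t → D.c x i = 0) :
    t * (x ⬝ᵥ x) < x ⬝ᵥ A.mulVec x := by
  rw [← sub_pos, D.form_sub]
  have key : ∀ i, D.c x i ≠ 0 → 0 < (D.e i - t) * D.c x i ^ 2 := fun i hi =>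
    mul_pos (sub_pos.2 (not_le.1 fun h' => hi (h i h'))) (by positivity)
  obtain ⟨i, hi⟩ := D.exists_c_ne hx
  refine Finset.sum_pos' (fun i _ => ?_) ⟨i, Finset.mem_univ i, key i hi⟩
  by_cases hc : D.c x i = 0
  · rw [hc]; simp
  · exact (key i hc).le

theorem card_subtype (p : ℝ → Prop) [DecidablePred p] :
    Fintype.card {i // p (D.e i)} = A.charpoly.roots.countP p := by
  rw [D.roots_eq, Multiset.countP_map, Fintype.card_subtype]
  rfl

theorem card_gt (t : ℝ) :
    Fintype.card {i // t < D.e i} + A.charpoly.roots.countP (· ≤ t) = Fintype.card ι := by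
  have h := Multiset.card_eq_countP_add_countP (· ≤ t) A.charpoly.roots
  have hc : Multiset.card A.charpoly.roots = Fintype.card ι := by rw [D.roots_eq]; simp
  simp only [not_le] at h
  rw [D.card_subtype (t < ·)]
  omega

theorem card_ge (t : ℝ) :
    Fintype.card {i // t ≤ D.e i} + A.charpoly.roots.countP (· < t) = Fintype.card ι := by
  have h := Multiset.card_eq_countP_add_countP (· < t) A.charpoly.roots
  have hc : Multiset.card A.charpoly.roots = Fintype.card ι := by rw [D.roots_eq]; simp
  simp only [not_lt] at h
  rw [D.card_subtype (t ≤ ·)]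
  omega

end Diagonalization

theorem exists_ne_zero_of_card_lt {ι κ : Type*} [Fintype ι] [Fintype κ]
    (f : κ → (ι → ℝ) →ₗ[ℝ] ℝ) (h : Fintype.card κ < Fintype.card ι) :
    ∃ x : ι → ℝ, x ≠ 0 ∧ ∀ a, f a x = 0 := by
  have := LinearMap.ker_ne_bot_of_finrank_lt (f := LinearMap.pi f) (by simpa using h)
  obtain ⟨x, hx, hx0⟩ := (Submodule.ne_bot_iff _).1 this
  exact ⟨x, hx0, fun a => congrFun (LinearMap.mem_ker.1 hx) a⟩

/-- For a sorted list and a downward closed predicate, the entry at position `j` satisfies the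
predicate iff more than `j` entries do. -/
theorem apply_iff_lt_countP {N : ℕ} {s : ℕ → ℝ} (hs : Monotone s) (p : ℝ → Prop)
    [DecidablePred p] (hp : ∀ a b, a ≤ b → p b → p a) {j : ℕ} (hj : j < N) :
    p (s j) ↔ j < ((Multiset.range N).map s).countP p := by
  have : ((Multiset.range N).map s).countP p = ((Finset.range N).filter fun i => p (s i)).card := by
    rw [Multiset.countP_map]; rfl
  rw [this]
  constructor
  · intro h
    have : Finset.range (j + 1) ⊆ (Finset.range N).filter fun i => p (s i) := by
      intro i hi
      rw [Finset.mem_range] at hi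
      rw [Finset.mem_filter, Finset.mem_range]
      exact ⟨by omega, hp _ _ (hs (by omega)) h⟩
    simpa using Finset.card_le_card this
  · intro h
    by_contra hn
    have : ((Finset.range N).filter fun i => p (s i)) ⊆ Finset.range j := by
      intro i hi
      rw [Finset.mem_filter] at hi
      rw [Finset.mem_range]
      by_contra hij
      exact hn (hp _ _ (hs (by omega)) hi.2)
    have := Finset.card_le_card this
    rw [Finset.card_range] at this
    omega

/-! ### The disjoint and the interconnected Laplacian -/

theorem antiregLap_isHermitian (k : ℕ) : (antiregLap k).IsHermitian := by
  ext i j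
  simp only [Matrix.conjTranspose_apply, star_trivial, antiregLap, Matrix.of_apply]
  by_cases h : i = j
  · subst h; rfl
  · have h' : ¬ j = i := fun e => h e.symm
    simp only [h, h', if_false, add_comm i.val]

theorem copiesLap_mulVec {n k : ℕ} (x : Fin n × Fin k → ℝ) (a : Fin n) (i : Fin k) :
    (copiesLap n k).mulVec x (a, i) = (antiregLap k).mulVec (fun j => x (a, j)) i := by
  simp [Matrix.mulVec, dotProduct, copiesLap, Fintype.sum_prod_type, Matrix.one_apply]

theorem copiesLap_isHermitian (n k : ℕ) : (copiesLap n k).IsHermitian := by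
  have hA := antiregLap_isHermitian k
  ext ⟨a, i⟩ ⟨b, j⟩
  have := hA.apply i j
  simp only [star_trivial] at this
  simp [copiesLap, this, Matrix.one_apply, eq_comm]

theorem interLap_isHermitian (n k : ℕ) (hk : 2 ≤ k) : (interLap n k hk).IsHermitian := by
  refine (copiesLap_isHermitian n k).add ?_
  ext q r
  simp [Matrix.sum_apply, Matrix.vecMulVec_apply, mul_comm]

theorem interLap_form {n k : ℕ} (hk : 2 ≤ k) (x : Fin n × Fin k → ℝ) :
    x ⬝ᵥ (interLap n k hk).mulVec x =
      x ⬝ᵥ (copiesLap n k).mulVec x + ∑ p, (zvec n k hk p ⬝ᵥ x) ^ 2 := by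
  rw [interLap, Matrix.add_mulVec, dotProduct_add, Matrix.sum_mulVec, dotProduct_sum]
  congr 1
  refine Finset.sum_congr rfl fun p _ => ?_
  rw [Matrix.vecMulVec_mulVec, dotProduct_comm]
  simp [sq]

theorem copiesLap_charpoly (n k : ℕ) :
    (copiesLap n k).charpoly = (antiregLap k).charpoly ^ n := by
  have h : (copiesLap n k).charmatrix =
      (Matrix.blockDiagonal fun _ : Fin n => (antiregLap k).charmatrix).submatrix
        (Equiv.prodComm _ _) (Equiv.prodComm _ _) := by
    ext1 ⟨a, i⟩ ⟨b, j⟩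
    by_cases hab : a = b <;> by_cases hij : i = j <;>
      simp [copiesLap, Matrix.blockDiagonal_apply, hab, hij]
  rw [Matrix.charpoly, h, Matrix.det_submatrix_equiv_self, Matrix.det_blockDiagonal]
  simp [Matrix.charpoly]

theorem zvec_dot {n k : ℕ} (hk : 2 ≤ k) (p : Fin (n - 1)) (x : Fin n × Fin k → ℝ) :
    zvec n k hk p ⬝ᵥ x =
      x (⟨p.val, by have := p.isLt; omega⟩, ⟨k - 1, by omega⟩) -
      x (⟨p.val + 1, by have := p.isLt; omega⟩, ⟨(k + 1) / 2 - 1, by omega⟩) := by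
  simp only [zvec, dotProduct, sub_mul, ite_mul, one_mul, zero_mul,
    Finset.sum_sub_distrib, Finset.sum_ite_eq', Finset.mem_univ, if_true]

/-! ### Comparison of eigenvalue counts -/

/-- An eigenvector of `L̄` orthogonal to all `z_p` which vanishes at vertex `⌈k/2⌉` of the first copy
is zero: it vanishes on the first copy, in particular at vertex `k`, so orthogonality to `z_1` makes
it vanish at vertex `⌈k/2⌉` of the second copy, and so on. -/
theorem copies_eigenvector_eq_zero {n k : ℕ} (hk : 2 ≤ k) (hn : 1 ≤ n) {x : Fin n × Fin k → ℝ} {t : ℝ}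
    (hx : (copiesLap n k).mulVec x = t • x)
    (h0 : x (⟨0, hn⟩, ⟨(k + 1) / 2 - 1, by omega⟩) = 0)
    (hz : ∀ p, zvec n k hk p ⬝ᵥ x = 0) : x = 0 := by
  have hcopy : ∀ a : Fin n, x (a, ⟨(k + 1) / 2 - 1, by omega⟩) = 0 → ∀ i, x (a, i) = 0 := by
    intro a ha
    have : (antiregLap k).mulVec (fun j => x (a, j)) = t • fun j => x (a, j) := by
      funext i
      rw [← copiesLap_mulVec, hx]
      rfl
    exact congrFun (antireg_eigenvector_eq_zero hk this ha)
  have hall : ∀ (a : ℕ) (ha : a < n) (i : Fin k), x (⟨a, ha⟩, i) = 0 := by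
    intro a
    induction a with
    | zero => exact fun ha => hcopy _ h0
    | succ a ih =>
      intro ha
      have := hz ⟨a, by omega⟩
      rw [zvec_dot, ih (by omega), zero_sub, neg_eq_zero] at this
      exact hcopy _ this
  funext ⟨a, i⟩
  exact hall a a.isLt i

/-- Monotonicity: adding the positive semidefinite terms `z_p z_pᵀ` does not increase the number of
eigenvalues below `t`. -/
theorem countP_lt_inter_le_countP_lt_copies {n k : ℕ} (hk : 2 ≤ k) (t : ℝ) :
    (interLap n k hk).charpoly.roots.countP (· < t) ≤
      (copiesLap n k).charpoly.roots.countP (· < t) := by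
  obtain ⟨D⟩ := exists_diagonalization (interLap_isHermitian n k hk)
  obtain ⟨B⟩ := exists_diagonalization (copiesLap_isHermitian n k)
  by_contra! h
  obtain ⟨x, hx, hf⟩ := exists_ne_zero_of_card_lt
    (Sum.elim (fun i : {i // t ≤ D.e i} => LinearMap.proj i.1 ∘ₗ D.c)
      (fun i : {i // B.e i < t} => LinearMap.proj i.1 ∘ₗ B.c)) (by
      have h1 := D.card_ge t
      have h2 := B.card_subtype (· < t)
      rw [Fintype.card_sum]
      omega)
  have h1 := D.form_lt hx fun i hi => hf (.inl ⟨i, hi⟩)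
  have h2 := B.le_form fun i hi => hf (.inr ⟨i, hi⟩)
  rw [interLap_form] at h1
  have h3 : 0 ≤ ∑ p, (zvec n k hk p ⬝ᵥ x) ^ 2 := Finset.sum_nonneg fun p _ => sq_nonneg _
  linarith

/-- The linear functional `x ↦ z_p ⬝ᵥ x`. -/
def zfun (n k : ℕ) (hk : 2 ≤ k) (p : Fin (n - 1)) : (Fin n × Fin k → ℝ) →ₗ[ℝ] ℝ :=
  dotProductBilin ℝ ℝ (zvec n k hk p)

/-- Interlacing: a perturbation of rank at most `n - 1` loses at most `n - 1` of the eigenvalues that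
are at most `t`. -/
theorem countP_le_copies_le_countP_le_inter {n k : ℕ} (hk : 2 ≤ k) (t : ℝ) :
    (copiesLap n k).charpoly.roots.countP (· ≤ t) ≤
      (interLap n k hk).charpoly.roots.countP (· ≤ t) + (n - 1) := by
  obtain ⟨D⟩ := exists_diagonalization (interLap_isHermitian n k hk)
  obtain ⟨B⟩ := exists_diagonalization (copiesLap_isHermitian n k)
  by_contra! h
  obtain ⟨x, hx, hf⟩ := exists_ne_zero_of_card_lt
    (Sum.elim (fun i : {i // D.e i ≤ t} => LinearMap.proj i.1 ∘ₗ D.c)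
      (Sum.elim (fun i : {i // t < B.e i} => LinearMap.proj i.1 ∘ₗ B.c) (zfun n k hk))) (by
      have h1 := D.card_subtype (· ≤ t)
      have h2 := B.card_gt t
      rw [Fintype.card_sum, Fintype.card_sum, Fintype.card_fin]
      omega)
  have h1 := D.lt_form hx fun i hi => hf (.inl ⟨i, hi⟩)
  have h2 := B.form_le fun i hi => hf (.inr (.inl ⟨i, hi⟩))
  have hz : ∀ p, zvec n k hk p ⬝ᵥ x = 0 := fun p => hf (.inr (.inr p))
  rw [interLap_form] at h1
  simp only [hz] at h1
  norm_num at h1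
  linarith

/-- Strict interlacing: imposing one more linear condition, the vanishing at vertex `⌈k/2⌉` of the
first copy, excludes the vectors on which the form of `𝓛` equals `t`, by
`copies_eigenvector_eq_zero`. -/
theorem countP_le_copies_le_countP_lt_inter {n k : ℕ} (hk : 2 ≤ k) (hn : 1 ≤ n) (t : ℝ) :
    (copiesLap n k).charpoly.roots.countP (· ≤ t) ≤
      (interLap n k hk).charpoly.roots.countP (· < t) + n := by
  obtain ⟨D⟩ := exists_diagonalization (interLap_isHermitian n k hk)
  obtain ⟨B⟩ := exists_diagonalization (copiesLap_isHermitian n k)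
  by_contra! h
  obtain ⟨x, hx, hf⟩ := exists_ne_zero_of_card_lt
    (Sum.elim (fun i : {i // D.e i < t} => LinearMap.proj i.1 ∘ₗ D.c)
      (Sum.elim (fun i : {i // t < B.e i} => LinearMap.proj i.1 ∘ₗ B.c)
        (Sum.elim (zfun n k hk) (fun _ : Unit =>
          LinearMap.proj (⟨0, hn⟩, ⟨(k + 1) / 2 - 1, by omega⟩))))) (by
      have h1 := D.card_subtype (· < t)
      have h2 := B.card_gt t
      rw [Fintype.card_sum, Fintype.card_sum, Fintype.card_sum, Fintype.card_fin,
        Fintype.card_unit]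
      omega)
  have h1 := D.le_form fun i hi => hf (.inl ⟨i, hi⟩)
  have hz : ∀ p, zvec n k hk p ⬝ᵥ x = 0 := fun p => hf (.inr (.inr (.inl p)))
  rw [interLap_form] at h1
  simp only [hz] at h1
  norm_num at h1
  have he := B.eig_of_le_form (fun i hi => hf (.inr (.inl ⟨i, hi⟩))) h1
  exact hx (copies_eigenvector_eq_zero hk hn he (hf (.inr (.inr (.inr ())))) hz)

/-- Lemma: upper interlacing bound.  Eigenvalues are encoded
0-indexed: each list is monotone on `ℕ` and enumerates the roots of the
characteristic polynomial with multiplicity.  For every `j ∈ {1,…,k-1}`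
(1-indexed positions `nj` and `nj+1`):
`λ_{nj}(𝓛) < λ_{nj+1}(𝓛) = λ_{nj+1}(L̄)`, and the common value is the
`(j+1)`-th smallest eigenvalue of `L_A^{(k)}`. -/
theorem interLap_upper_eigenvalue_bounds (k n : ℕ) (hk : 2 ≤ k) (hn : 1 ≤ n)
    (ℓbar ℓ μ : ℕ → ℝ)
    (mbar : Monotone ℓbar) (mℓ : Monotone ℓ) (mμ : Monotone μ)
    (rbar : (copiesLap n k).charpoly.roots = (Multiset.range (n * k)).map ℓbar)
    (rℓ : (interLap n k hk).charpoly.roots = (Multiset.range (n * k)).map ℓ)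
    (rμ : (antiregLap k).charpoly.roots = (Multiset.range k).map μ) :
    ∀ j : ℕ, 1 ≤ j → j < k →
      ℓ (n * j - 1) < ℓ (n * j) ∧ ℓ (n * j) = ℓbar (n * j) ∧ ℓbar (n * j) = μ j := by
  intro j hj hjk
  have hnj : n * j + n ≤ n * k := by nlinarith
  have hpos : 1 ≤ n * j := Nat.mul_pos hn hj
  have plt : ∀ a b : ℝ, a ≤ b → b < μ j → a < μ j := fun _ _ => lt_of_le_of_lt
  have ple : ∀ a b : ℝ, a ≤ b → b ≤ μ j → a ≤ μ j := fun _ _ => le_trans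
  have hcopies : ∀ (p : ℝ → Prop) [DecidablePred p], (copiesLap n k).charpoly.roots.countP p =
      n * (antiregLap k).charpoly.roots.countP p := by
    intro p _
    rw [copiesLap_charpoly, Polynomial.roots_pow, Multiset.countP_nsmul]
  have c1 : (antiregLap k).charpoly.roots.countP (· < μ j) ≤ j := by
    rw [rμ]
    exact not_lt.1 fun h => lt_irrefl _ ((apply_iff_lt_countP mμ _ plt hjk).2 h)
  have c2 : j + 1 ≤ (antiregLap k).charpoly.roots.countP (· ≤ μ j) := by
    rw [rμ]
    exact (apply_iff_lt_countP mμ _ ple hjk).1 le_rfl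
  have b1 : (copiesLap n k).charpoly.roots.countP (· < μ j) ≤ n * j := by
    rw [hcopies]; exact Nat.mul_le_mul_left n c1
  have b2 : n * j + n ≤ (copiesLap n k).charpoly.roots.countP (· ≤ μ j) := by
    rw [hcopies]; exact Nat.mul_le_mul_left n c2
  have d1 := countP_lt_inter_le_countP_lt_copies (n := n) hk (μ j)
  have d2 := countP_le_copies_le_countP_le_inter (n := n) hk (μ j)
  have d3 := countP_le_copies_le_countP_lt_inter hk hn (μ j)
  rw [rbar] at b1 b2 d1 d2 d3
  rw [rℓ] at d1 d2 d3
  have bar1 : μ j ≤ ℓbar (n * j) := not_lt.1 fun h => by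
    have := (apply_iff_lt_countP mbar _ plt (show n * j < n * k by omega)).1 h
    omega
  have bar2 : ℓbar (n * j) ≤ μ j :=
    (apply_iff_lt_countP mbar _ ple (show n * j < n * k by omega)).2 (by omega)
  have l1 : μ j ≤ ℓ (n * j) := not_lt.1 fun h => by
    have := (apply_iff_lt_countP mℓ _ plt (show n * j < n * k by omega)).1 h
    omega
  have l2 : ℓ (n * j) ≤ μ j :=
    (apply_iff_lt_countP mℓ _ ple (show n * j < n * k by omega)).2 (by omega)
  have l3 : ℓ (n * j - 1) < μ j :=
    (apply_iff_lt_countP mℓ _ plt (show n * j - 1 < n * k by omega)).2 (by omega)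
  exact ⟨by linarith, by linarith, by linarith⟩
end

section
/- Let k ≥ 2, n ≥ 1, κ̄ = ⌈k/2⌉, and 𝓛 = I_n ⊗ L_A^{(k)} + Σ_{i=1}^{n−1} z_i z_iᵀ with z_i = e_{ik} − e_{ik+κ̄}. Then the pair (𝓛, e_{κ̄}) is controllable; that is, the graph obtained by interconnecting n copies of the k-vertex antiregular graph (connecting the terminal vertex of the p-th copy to the degree-repeating vertex κ̄ of the (p+1)-th copy for each p ∈ {1,…,n−1}) is Laplacian controllable by a single input connected to the degree-repeating vertex κ̄ of the first copy. -/
/-- `(M, b)` is controllable: `b, Mb, M²b, …` span the whole space. -/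
def IsControllable {ι : Type} [Fintype ι] [DecidableEq ι]
    (M : Matrix ι ι ℝ) (b : ι → ℝ) : Prop :=
  Submodule.span ℝ (Set.range fun j : Fin (Fintype.card ι) => (M ^ (j : ℕ)).mulVec b) = ⊤

/-! ### A single antiregular graph -/

/-- Action of the antiregular Laplacian on sequences, with 0-indexed vertices:
`(L x)_i = (k - i) x_i - ∑_{j < k - i} x_j`.  The term `j = i`, when it occurs in the sum, is
compensated by the coefficient `k - i`, so that one formula covers both kinds of vertices. -/
noncomputable def seqLap (k : ℕ) (x : ℕ → ℝ) (i : ℕ) : ℝ :=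
  ((k : ℝ) - i) * x i - ∑ j ∈ Finset.range (k - i), x j

lemma seqLap_eq (k : ℕ) (x : ℕ → ℝ) (i : ℕ) :
    seqLap k x i = ((k : ℝ) - i) * x i - ∑ j ∈ Finset.range k, if i + j < k then x j else 0 := by
  unfold seqLap
  congr 1
  rw [← Finset.sum_filter]
  congr 1
  ext j
  simp only [Finset.mem_range, Finset.mem_filter]
  omega

lemma seqLap_symm (k : ℕ) (v x : ℕ → ℝ) :
    ∑ i ∈ Finset.range k, v i * seqLap k x i = ∑ i ∈ Finset.range k, x i * seqLap k v i := by
  simp only [seqLap_eq, mul_sub, Finset.sum_sub_distrib, Finset.mul_sum]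
  congr 1
  · exact Finset.sum_congr rfl fun i _ => by ring
  · rw [Finset.sum_comm]
    refine Finset.sum_congr rfl fun i _ => Finset.sum_congr rfl fun j _ => ?_
    rw [Nat.add_comm j i]
    split_ifs <;> ring

lemma seqLap_sub_const (k : ℕ) (x : ℕ → ℝ) (c : ℝ) (i : ℕ) (hi : i < k) :
    seqLap k (fun j => x j - c) i = seqLap k x i := by
  simp only [seqLap, Finset.sum_sub_distrib, Finset.sum_const, Finset.card_range, nsmul_eq_mul]
  rw [Nat.cast_sub hi.le]
  ring

lemma sum_seqLap (k : ℕ) (x : ℕ → ℝ) : ∑ i ∈ Finset.range k, seqLap k x i = 0 := by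
  have h := seqLap_symm k (fun _ => 1) x
  simp only [one_mul] at h
  rw [h]
  refine Finset.sum_eq_zero fun i hi => ?_
  have hi' := Finset.mem_range.1 hi
  simp [seqLap, Nat.cast_sub hi'.le]

/-- Deleting the dominating vertex `0` and the terminal vertex `k + 1` of `A_{k+2}` leaves `A_k`;
each remaining vertex loses exactly its edge to the vertex `0`. -/
lemma seqLap_succ (k : ℕ) (x : ℕ → ℝ) (i : ℕ) (hi : i < k) :
    seqLap (k + 2) x (i + 1) = seqLap k (fun j => x (j + 1)) i + x (i + 1) - x 0 := by
  unfold seqLap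
  have : k + 2 - (i + 1) = (k - i) + 1 := by omega
  rw [this, Finset.sum_range_succ']
  push_cast
  ring

/-- Only the middle rows of the eigenvalue equation in `A_{k+2}` are needed for the deviation
from the mean on the middle vertices to satisfy the eigenvalue equation in `A_k`, with eigenvalue
shifted by one. -/
lemma middle_rows (k : ℕ) (hk : 1 ≤ k) (x : ℕ → ℝ) (l : ℝ)
    (h : ∀ i < k, seqLap (k + 2) x (i + 1) = l * x (i + 1)) :
    ∃ c : ℝ, x 0 = (1 - l) * c ∧
      (∑ i ∈ Finset.range k, (x (i + 1) - c) = 0) ∧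
      ∀ i < k, seqLap k (fun j => x (j + 1) - c) i = (l - 1) * (x (i + 1) - c) := by
  have hk0 : (k : ℝ) ≠ 0 := by positivity
  set S := ∑ i ∈ Finset.range k, x (i + 1) with hS
  have hrow : ∀ i < k, seqLap k (fun j => x (j + 1)) i = (l - 1) * x (i + 1) + x 0 := by
    intro i hi
    have := h i hi
    rw [seqLap_succ k x i hi] at this
    linarith
  have hsum : (l - 1) * S + k * x 0 = 0 := by
    have := sum_seqLap k (fun j => x (j + 1))
    rw [Finset.sum_congr rfl fun i hi => hrow i (Finset.mem_range.1 hi), Finset.sum_add_distrib,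
      ← Finset.mul_sum] at this
    simpa using this
  have hx0 : x 0 = (1 - l) * (S / k) := by
    field_simp
    linarith
  refine ⟨S / k, hx0, ?_, ?_⟩
  · simp only [Finset.sum_sub_distrib, Finset.sum_const, Finset.card_range, nsmul_eq_mul]
    rw [← hS]
    field_simp
    ring
  · intro i hi
    rw [seqLap_sub_const k (fun j => x (j + 1)) _ i hi, hrow i hi, hx0]
    ring

/-- Eigenvectors with zero sum have eigenvalue in `[1, k]` and do not vanish at the
degree-repeating vertex.  The bounds on the eigenvalue drive the induction `k → k + 2`: they
exclude that the eigenvalues coming from `A_k` meet the eigenvalues `1` and `k + 2` of the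
eigenvectors that are constant on the middle vertices. -/
lemma eig_sum_zero : ∀ (k : ℕ) (x : ℕ → ℝ) (l : ℝ), 1 ≤ k →
    (∀ i < k, seqLap k x i = l * x i) → (∑ i ∈ Finset.range k, x i = 0) →
    (∃ i < k, x i ≠ 0) → 1 ≤ l ∧ l ≤ k ∧ x ((k - 1) / 2) ≠ 0
  | 0, _, _, h, _, _, _ => by omega
  | 1, x, l, _, _, hs, ⟨i, hi, hx⟩ => by
    obtain rfl : i = 0 := by omega
    simp at hs
    exact absurd hs hx
  | 2, x, l, _, h, hs, ⟨i, hi, hx⟩ => by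
    have h0 := h 0 (by omega)
    simp only [seqLap, Nat.sub_zero, hs] at h0
    have hx0 : x 0 ≠ 0 := by
      intro hx0
      simp [Finset.sum_range_succ, hx0] at hs
      interval_cases i <;> simp_all
    have : l = 2 := by
      apply mul_right_cancel₀ hx0
      push_cast at h0
      linarith
    subst this
    norm_num [hx0]
  | k + 3, x, l, _, h, hs, hne => by
    obtain ⟨c, hc, hu, hU⟩ := middle_rows (k + 1) (by omega) x l
      (fun i hi => h (i + 1) (by omega))
    have hm : (k + 2) / 2 = (k + 1 - 1) / 2 + 1 := by omega
    have h0 := h 0 (by omega)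
    simp only [seqLap, Nat.sub_zero, hs] at h0
    push_cast at h0 ⊢
    by_cases hz : ∃ i < k + 1, x (i + 1) - c ≠ 0
    · obtain ⟨h1, h2, h3⟩ := eig_sum_zero (k + 1) (fun j => x (j + 1) - c) (l - 1) (by omega)
        hU hu hz
      push_cast at h2
      have hx0 : x 0 = 0 := by
        have : ((k : ℝ) + 3 - l) * x 0 = 0 := by linarith
        rcases mul_eq_zero.1 this with h' | h'
        · linarith
        · exact h'
      have hc0 : c = 0 := by
        rw [hx0] at hc
        rcases mul_eq_zero.1 hc.symm with h' | h'
        · linarith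
        · exact h'
      refine ⟨by linarith, by linarith, ?_⟩
      rw [hm]
      simpa [hc0] using h3
    · push Not at hz
      have hxc : ∀ i < k + 1, x (i + 1) = c := fun i hi => by linarith [hz i hi]
      have hcne : c ≠ 0 := by
        intro hc0
        have hx0 : x 0 = 0 := by rw [hc, hc0, mul_zero]
        have hlast : x (k + 2) = 0 := by
          rw [Finset.sum_range_succ, Finset.sum_range_succ', Finset.sum_eq_zero] at hs
          · simpa [hx0] using hs
          · intro i hi
            rw [hxc i (Finset.mem_range.1 hi), hc0]
        obtain ⟨i, hi, hxi⟩ := hne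
        apply hxi
        rcases i with _ | i
        · exact hx0
        · by_cases hik : i < k + 1
          · rw [hxc i hik, hc0]
          · obtain rfl : i = k + 1 := by omega
            exact hlast
      refine ⟨?_, ?_, ?_⟩
      rotate_left 2
      · rw [hm, hxc _ (by omega)]
        exact hcne
      all_goals
        by_cases hx0 : x 0 = 0
        · rw [hx0] at hc
          rcases mul_eq_zero.1 hc.symm with h' | h'
          · have : (0 : ℝ) ≤ k := by positivity
            linarith
          · exact absurd h' hcne
        · have : l = (k : ℝ) + 3 := by
            apply mul_right_cancel₀ hx0
            linarith
          have : (0 : ℝ) ≤ k := by positivity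
          linarith

/-- Observability of a single copy from its degree-repeating vertex. -/
lemma eig_obs (k : ℕ) (hk : 1 ≤ k) (x : ℕ → ℝ) (l : ℝ)
    (h : ∀ i < k, seqLap k x i = l * x i) (hm : x ((k - 1) / 2) = 0) : ∀ i < k, x i = 0 := by
  have hk0 : (k : ℝ) ≠ 0 := by positivity
  set S := ∑ i ∈ Finset.range k, x i with hS
  have hlS : l * S = 0 := by
    have := sum_seqLap k x
    rwa [Finset.sum_congr rfl fun i hi => h i (Finset.mem_range.1 hi), ← Finset.mul_sum] at this
  by_cases hS0 : S = 0
  · by_contra! hne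
    exact (eig_sum_zero k x l hk h hS0 hne).2.2 hm
  · have hl : l = 0 := (mul_eq_zero.1 hlS).resolve_right hS0
    subst hl
    have hconst : ∀ i < k, x i - S / k = 0 := by
      by_contra! hne
      have := (eig_sum_zero k (fun j => x j - S / k) 0 hk ?_ ?_ hne).1
      · linarith
      · intro i hi
        rw [seqLap_sub_const k x _ i hi, h i hi]
        ring
      · simp only [Finset.sum_sub_distrib, Finset.sum_const, Finset.card_range, nsmul_eq_mul]
        rw [← hS]
        field_simp
        ring
    have := hconst ((k - 1) / 2) (by omega)
    intro i hi
    linarith [hconst i hi]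

/-- If a vector vanishes at the degree-repeating vertex and satisfies the eigenvalue equation
except possibly at the terminal vertex, then it is zero, unless `l` is an eigenvalue having an
eigenvector that vanishes at the terminal vertex. -/
lemma head_copy (k : ℕ) (hk : 2 ≤ k) (x : ℕ → ℝ) (l : ℝ)
    (h : ∀ i < k - 1, seqLap k x i = l * x i) (hm : x ((k - 1) / 2) = 0) :
    (∀ i < k, x i = 0) ∨
      ∃ v : ℕ → ℝ, (∀ i < k, seqLap k v i = l * v i) ∧ v ((k - 1) / 2) ≠ 0 ∧ v (k - 1) = 0 := by
  obtain ⟨k, rfl⟩ : ∃ j, k = j + 2 := ⟨k - 2, by omega⟩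
  have h0 := h 0 (by omega)
  simp only [seqLap, Nat.sub_zero] at h0
  rcases Nat.eq_zero_or_pos k with rfl | hkpos
  · left
    simp at hm
    simp [Finset.sum_range_succ, hm] at h0
    intro i hi
    interval_cases i <;> assumption
  obtain ⟨c, hc, hu, hU⟩ := middle_rows k hkpos x l (fun i hi => h (i + 1) (by omega))
  have hmid : (k + 2 - 1) / 2 = (k - 1) / 2 + 1 := by omega
  rw [hmid] at hm ⊢
  by_cases hz : ∃ i < k, x (i + 1) - c ≠ 0
  · right
    have h3 := (eig_sum_zero k (fun j => x (j + 1) - c) (l - 1) hkpos hU hu hz).2.2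
    -- the eigenvector of `A_k`, extended by zero to the vertices `0` and `k + 1` of `A_{k+2}`
    let v : ℕ → ℝ := fun j => if 1 ≤ j ∧ j ≤ k then x j - c else 0
    have hv : ∀ i < k, v (i + 1) = x (i + 1) - c := fun i hi => by
      simp only [v]
      rw [if_pos (by omega)]
    have hv0 : v 0 = 0 := by simp [v]
    have hvl : v (k + 1) = 0 := by simp [v]
    refine ⟨v, ?_, ?_, hvl⟩
    · intro i hi
      rcases i with _ | i
      · unfold seqLap
        rw [Nat.sub_zero, Finset.sum_range_succ, Finset.sum_range_succ', hv0, hvl,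
          Finset.sum_congr rfl fun i hi => hv i (Finset.mem_range.1 hi), hu]
        simp
      · by_cases hik : i < k
        · have hcongr : seqLap k (fun j => v (j + 1)) i = seqLap k (fun j => x (j + 1) - c) i := by
            simp only [seqLap]
            rw [hv i hik, Finset.sum_congr rfl fun j hj =>
              hv j (by have := Finset.mem_range.1 hj; omega)]
          rw [seqLap_succ k v i hik, hcongr, hU i hik, hv0, hv i hik]
          ring
        · obtain rfl : i = k := by omega
          unfold seqLap
          rw [show i + 2 - (i + 1) = 1 by omega]
          simp [hv0, hvl]
    · rw [hv _ (by omega)]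
      exact h3
  · left
    push Not at hz
    have hc0 : c = 0 := by linarith [hz ((k - 1) / 2) (by omega)]
    subst hc0
    have hx0 : x 0 = 0 := by rw [hc, mul_zero]
    have hxi : ∀ i < k, x (i + 1) = 0 := fun i hi => by linarith [hz i hi]
    rw [Finset.sum_range_succ, Finset.sum_range_succ', hx0,
      Finset.sum_eq_zero fun i hi => hxi i (Finset.mem_range.1 hi)] at h0
    intro i hi
    rcases i with _ | i
    · exact hx0
    · by_cases hik : i < k
      · exact hxi i hik
      · obtain rfl : i = k := by omega
        linarith

/-! ### The chain of copies -/

/-- Observability of the chain.  Here `Y p` is the restriction of an eigenvector to copy `p`, and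
`D p` is the difference of its values along the edge between the copies `p - 1` and `p`, with
`D 0 = D n = 0` because there is no edge at the two ends. -/
lemma chain_obs (k n : ℕ) (hk : 2 ≤ k) (l : ℝ) (Y : ℕ → ℕ → ℝ) (D : ℕ → ℝ)
    (hD0 : D 0 = 0) (hDn : D n = 0)
    (hD : ∀ p, p + 1 < n → D (p + 1) = Y p (k - 1) - Y (p + 1) ((k - 1) / 2))
    (hrow : ∀ p < n, ∀ i < k, seqLap k (Y p) i + (if i = k - 1 then D (p + 1) else 0)
      - (if i = (k - 1) / 2 then D p else 0) = l * Y p i)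
    (h0 : Y 0 ((k - 1) / 2) = 0) : ∀ p < n, ∀ i < k, Y p i = 0 := by
  by_cases hv : ∃ v : ℕ → ℝ, (∀ i < k, seqLap k v i = l * v i) ∧
      v ((k - 1) / 2) ≠ 0 ∧ v (k - 1) = 0
  · obtain ⟨v, hvE, hvm, hvl⟩ := hv
    -- pairing the equation of copy `p` with `v` isolates `D p`
    have hDz : ∀ p < n, D p = 0 := by
      intro p hp
      have hs : ∑ i ∈ Finset.range k, v i * (seqLap k (Y p) i +
          (if i = k - 1 then D (p + 1) else 0) - (if i = (k - 1) / 2 then D p else 0))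
          = ∑ i ∈ Finset.range k, v i * (l * Y p i) :=
        Finset.sum_congr rfl fun i hi => by rw [hrow p hp i (Finset.mem_range.1 hi)]
      simp only [mul_sub, mul_add, Finset.sum_sub_distrib, Finset.sum_add_distrib, mul_ite,
        mul_zero, Finset.sum_ite_eq', Finset.mem_range] at hs
      rw [seqLap_symm, if_pos (by omega), if_pos (by omega), hvl,
        Finset.sum_congr rfl fun i hi => by rw [hvE i (Finset.mem_range.1 hi)]] at hs
      have he : ∑ i ∈ Finset.range k, Y p i * (l * v i)
          = ∑ i ∈ Finset.range k, v i * (l * Y p i) :=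
        Finset.sum_congr rfl fun i _ => by ring
      rw [he] at hs
      have : v ((k - 1) / 2) * D p = 0 := by linarith
      exact (mul_eq_zero.1 this).resolve_left hvm
    have hE : ∀ p < n, ∀ i < k, seqLap k (Y p) i = l * Y p i := by
      intro p hp i hi
      have hD1 : D (p + 1) = 0 := by
        rcases Nat.lt_or_ge (p + 1) n with h | h
        · exact hDz _ h
        · rwa [show p + 1 = n by omega]
      simpa [hD1, hDz p hp] using hrow p hp i hi
    -- the eigenspace of `l` is the line through `v`, so `Y p` vanishes at the terminal vertex
    have hlast : ∀ p < n, Y p (k - 1) = 0 := by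
      intro p hp
      have := eig_obs k (by omega)
        (fun i => v ((k - 1) / 2) * Y p i - Y p ((k - 1) / 2) * v i) l ?_ (by ring)
        (k - 1) (by omega)
      · simp only [hvl, mul_zero, sub_zero] at this
        exact (mul_eq_zero.1 this).resolve_left hvm
      · intro i hi
        have h1 := hE p hp i hi
        have h2 := hvE i hi
        simp only [seqLap, Finset.sum_sub_distrib, ← Finset.mul_sum] at h1 h2 ⊢
        linear_combination v ((k - 1) / 2) * h1 - Y p ((k - 1) / 2) * h2
    intro p hp
    refine eig_obs k (by omega) (Y p) l (hE p hp) ?_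
    rcases p with _ | p
    · exact h0
    · have := hD p hp
      rw [hDz _ hp, hlast p (by omega)] at this
      linarith
  · have key : ∀ p < n, D p = 0 ∧ Y p ((k - 1) / 2) = 0 → ∀ i < k, Y p i = 0 := by
      rintro p hp ⟨hDp, hYp⟩
      refine (head_copy k hk (Y p) l ?_ hYp).resolve_right hv
      intro i hi
      have := hrow p hp i (by omega)
      rw [if_neg (by omega), hDp] at this
      simpa using this
    have hind : ∀ p < n, D p = 0 ∧ Y p ((k - 1) / 2) = 0 := by
      intro p
      induction p with
      | zero => exact fun _ => ⟨hD0, h0⟩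
      | succ p ih =>
        intro hp
        have hpn : p < n := by omega
        have hz := key p hpn (ih hpn)
        have hr := hrow p hpn (k - 1) (by omega)
        have hl : seqLap k (Y p) (k - 1) = 0 := by
          unfold seqLap
          rw [hz (k - 1) (by omega), Finset.sum_eq_zero]
          · ring
          · intro j hj
            have := Finset.mem_range.1 hj
            exact hz j (by omega)
        rw [hl, (ih hpn).1, hz (k - 1) (by omega)] at hr
        have hDp : D (p + 1) = 0 := by simpa using hr
        refine ⟨hDp, ?_⟩
        have := hD p hp
        rw [hDp, hz (k - 1) (by omega)] at this
        linarith
    exact fun p hp => key p hp (hind p hp)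

/-! ### The Hautus test -/

/-- By Cayley–Hamilton every power `M ^ j b` lies in the span of the first `N` of them. -/
lemma krylov_mem {ι : Type} [Fintype ι] [DecidableEq ι] (M : Matrix ι ι ℝ) (b : ι → ℝ) (j : ℕ) :
    (M ^ j).mulVec b ∈ Submodule.span ℝ
      (Set.range fun j : Fin (Fintype.card ι) => (M ^ (j : ℕ)).mulVec b) := by
  rw [Matrix.pow_eq_aeval_mod_charpoly M j]
  set q := (Polynomial.X ^ j %ₘ M.charpoly : Polynomial ℝ) with hq
  have hdeg : q.degree < Fintype.card ι := by
    rw [← Matrix.charpoly_degree_eq_dim M]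
    exact Polynomial.degree_modByMonic_lt _ (Matrix.charpoly_monic M)
  rw [Polynomial.aeval_eq_sum_range, Matrix.sum_mulVec]
  refine Submodule.sum_mem _ fun i _ => ?_
  rw [Matrix.smul_mulVec]
  by_cases hi : i < Fintype.card ι
  · exact Submodule.smul_mem _ _ (Submodule.subset_span ⟨⟨i, hi⟩, rfl⟩)
  · rw [Polynomial.coeff_eq_zero_of_degree_lt (hdeg.trans_le (by exact_mod_cast not_lt.1 hi)),
      zero_smul]
    exact Submodule.zero_mem _

/-- Popov–Belevitch–Hautus test for a symmetric matrix: the pair is controllable as soon as no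
eigenvector is orthogonal to `b`.  The orthogonal complement of the Krylov space is invariant under
`M`, hence the sum of its intersections with the eigenspaces of `M`. -/
lemma controllable_of_eig {ι : Type} [Fintype ι] [DecidableEq ι] (M : Matrix ι ι ℝ) (hM : M.IsSymm)
    (b : ι → ℝ) (h : ∀ (l : ℝ) (y : ι → ℝ), M.mulVec y = l • y → y ⬝ᵥ b = 0 → y = 0) :
    IsControllable M b := by
  unfold IsControllable
  by_contra hne
  obtain ⟨f, hf0, hf⟩ := Submodule.exists_le_ker_of_lt_top _ (lt_top_iff_ne_top.2 hne)
  let T : Module.End ℝ (EuclideanSpace ℝ ι) := Matrix.toEuclideanLin M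
  have hT : T.IsSymmetric := Matrix.isSymmetric_toEuclideanLin_iff.2 (by
    rw [Matrix.IsHermitian, Matrix.conjTranspose_eq_transpose_of_trivial]
    exact hM)
  let P : Submodule ℝ (EuclideanSpace ℝ ι) :=
    { carrier := {y | ∀ j : ℕ, y.ofLp ⬝ᵥ (M ^ j).mulVec b = 0}
      add_mem' := fun {x y} hx hy j => by
        rw [WithLp.ofLp_add, add_dotProduct, hx j, hy j, add_zero]
      zero_mem' := fun j => by simp
      smul_mem' := fun c x hx j => by
        rw [WithLp.ofLp_smul, smul_dotProduct, hx j, smul_zero] }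
  have hinv : ∀ x ∈ P, T x ∈ P := by
    intro x hx j
    have := hx (j + 1)
    rw [pow_succ', ← Matrix.mulVec_mulVec, Matrix.dotProduct_mulVec, ← Matrix.mulVec_transpose,
      hM.eq] at this
    exact this
  have htop : ⨆ μ, T.genEigenspace μ 1 = ⊤ :=
    (Submodule.orthogonal_eq_bot_iff).1 hT.orthogonalComplement_iSup_eigenspaces_eq_bot
  have hP : P = ⊥ := by
    rw [Submodule.eq_iSup_inf_genEigenspace 1 hinv htop, iSup_eq_bot]
    intro μ
    rw [eq_bot_iff]
    rintro x ⟨hx, hxe⟩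
    have hTx : T x = μ • x := Module.End.mem_eigenspace_iff.1 hxe
    have := h μ x.ofLp (by
      have := congrArg WithLp.ofLp hTx
      simpa [T] using this) (by simpa using hx 0)
    simpa using this
  have hfdot : ∀ x : ι → ℝ, f x = (fun i => f (Pi.single i 1)) ⬝ᵥ x := by
    intro x
    conv_lhs => rw [← Finset.univ_sum_single x, map_sum]
    refine Finset.sum_congr rfl fun i _ => ?_
    rw [← mul_one (x i), ← smul_eq_mul, Pi.single_smul', map_smul]
    simp [mul_comm]
  have hy : WithLp.toLp 2 (fun i => f (Pi.single i 1)) ∈ P := by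
    intro j
    rw [← hfdot]
    exact hf (krylov_mem M b j)
  rw [hP, Submodule.mem_bot] at hy
  apply hf0
  refine LinearMap.ext fun x => ?_
  have hz : (fun i => f (Pi.single i 1)) = 0 := congrArg WithLp.ofLp hy
  rw [hfdot, hz, zero_dotProduct, LinearMap.zero_apply]

/-! ### Coordinates of `𝓛` -/

lemma antiregLap_apply (k : ℕ) (i j : Fin k) :
    antiregLap k i j = (if i = j then (k : ℝ) - i else 0) - (if i.val + j.val < k then 1 else 0) := by
  unfold antiregLap
  rw [Matrix.of_apply]
  by_cases hij : i = j
  · subst hij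
    have hcard : (Finset.univ.filter fun m : Fin k => i.val + m.val < k).card = k - i := by
      have : (Finset.univ.filter fun m : Fin k => i.val + m.val < k).map Fin.valEmbedding
          = Finset.range (k - i) := by
        ext m
        simp only [Finset.mem_map, Finset.mem_filter, Finset.mem_univ, true_and,
          Fin.valEmbedding_apply, Finset.mem_range]
        constructor
        · rintro ⟨a, ha, rfl⟩
          omega
        · intro hm
          exact ⟨⟨m, by omega⟩, by simp only; omega, rfl⟩
      rw [← Finset.card_map Fin.valEmbedding, this, Finset.card_range]
    have herase : (Finset.univ.filter fun m : Fin k => m ≠ i ∧ i.val + m.val + 2 ≤ k + 1)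
        = (Finset.univ.filter fun m : Fin k => i.val + m.val < k).erase i := by
      ext m
      simp only [Finset.mem_filter, Finset.mem_univ, true_and, Finset.mem_erase]
      refine and_congr_right fun _ => ?_
      omega
    rw [if_pos rfl, if_pos rfl, herase]
    have hik : i.val < k := i.isLt
    split_ifs with h2
    · rw [Finset.card_erase_of_mem (by simpa using h2), hcard, Nat.cast_sub (by omega),
        Nat.cast_sub hik.le]
      simp
    · rw [Finset.erase_eq_of_notMem (by simpa using h2), hcard, Nat.cast_sub hik.le]
      simp
  · rw [if_neg hij, if_neg hij]
    have : (i.val + j.val + 2 ≤ k + 1) ↔ i.val + j.val < k := by omega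
    simp only [this]
    split_ifs <;> simp

lemma antiregLap_sum (k : ℕ) (x : ℕ → ℝ) (i : Fin k) :
    ∑ j : Fin k, antiregLap k i j * x j = seqLap k x i := by
  simp only [antiregLap_apply, sub_mul, Finset.sum_sub_distrib, ite_mul, zero_mul, one_mul,
    Finset.sum_ite_eq, Finset.mem_univ, if_true]
  rw [seqLap_eq]
  congr 1
  · ring
  · exact Fin.sum_univ_eq_sum_range (fun j => if i.val + j < k then x j else 0) k

lemma antiregLap_symm (k : ℕ) (i j : Fin k) : antiregLap k i j = antiregLap k j i := by
  rw [antiregLap_apply, antiregLap_apply, Nat.add_comm j.val]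
  by_cases hij : i = j
  · subst hij
    rfl
  · rw [if_neg hij, if_neg (Ne.symm hij)]

lemma interLap_symm (n k : ℕ) (hk : 2 ≤ k) : (interLap n k hk).IsSymm := by
  ext q r
  simp only [interLap, copiesLap, Matrix.transpose_apply, Matrix.add_apply, Matrix.sum_apply,
    Matrix.vecMulVec_apply, Matrix.kroneckerMap_apply]
  rw [antiregLap_symm, Matrix.one_apply, Matrix.one_apply]
  simp only [eq_comm, mul_comm]

/-- The row of `𝓛` at vertex `i` of copy `p`, split into the contribution of the copy itself and those
of its edges to the next and to the previous copy. -/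
lemma interLap_row (n k : ℕ) (hk : 2 ≤ k) (Y : ℕ → ℕ → ℝ) (p : Fin n) (i : Fin k) :
    (interLap n k hk).mulVec (fun q => Y q.1 q.2) (p, i) =
      seqLap k (Y p) i
      + (if i.val = k - 1 then
          (if p.val + 1 < n then Y p (k - 1) - Y (p + 1) ((k - 1) / 2) else 0) else 0)
      - (if i.val = (k - 1) / 2 then
          (if 1 ≤ p.val then Y (p - 1) (k - 1) - Y p ((k - 1) / 2) else 0) else 0) := by
  have hmid : (k + 1) / 2 - 1 = (k - 1) / 2 := by omega
  have hz : ∀ q : Fin (n - 1), zvec n k hk q ⬝ᵥ (fun q : Fin n × Fin k => Y q.1 q.2)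
      = Y q (k - 1) - Y (q + 1) ((k - 1) / 2) := by
    intro q
    simp [zvec, dotProduct, sub_mul, Finset.sum_sub_distrib, hmid]
  have hzp : ∀ q : Fin (n - 1), zvec n k hk q (p, i)
      = (if q.val = p.val then (if i.val = k - 1 then 1 else 0) else 0)
        - (if q.val + 1 = p.val then (if i.val = (k - 1) / 2 then 1 else 0) else 0) := by
    intro q
    simp only [zvec, Prod.mk.injEq, Fin.ext_iff, hmid, ite_and]
    simp only [eq_comm]
  rw [interLap, Matrix.add_mulVec, Pi.add_apply, Matrix.sum_mulVec, Finset.sum_apply, add_sub_assoc]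
  congr 1
  · rw [← antiregLap_sum]
    simp [Matrix.mulVec, dotProduct, copiesLap, Fintype.sum_prod_type, Matrix.one_apply]
  · obtain ⟨F, hF⟩ : ∃ F : ℕ → ℝ, F = fun q : ℕ => (if q = p.val then (if i.val = k - 1 then
            Y q (k - 1) - Y (q + 1) ((k - 1) / 2) else 0) else 0)
        - (if q + 1 = p.val then (if i.val = (k - 1) / 2 then
            Y q (k - 1) - Y (q + 1) ((k - 1) / 2) else 0) else 0) := ⟨_, rfl⟩
    have : ∀ q : Fin (n - 1), (Matrix.vecMulVec (zvec n k hk q) (zvec n k hk q)).mulVec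
        (fun q : Fin n × Fin k => Y q.1 q.2) (p, i) = F q := by
      intro q
      rw [Matrix.vecMulVec_mulVec]
      simp only [Pi.smul_apply, MulOpposite.smul_eq_mul_unop, MulOpposite.unop_op, hz, hzp, hF]
      split_ifs <;> ring
    rw [Finset.sum_congr rfl fun q _ => this q, Fin.sum_univ_eq_sum_range F, hF, Finset.sum_sub_distrib]
    congr 1
    · rw [Finset.sum_ite_eq']
      simp only [Finset.mem_range]
      have : p.val < n - 1 ↔ p.val + 1 < n := by omega
      simp only [this]
      split_ifs <;> rfl
    · rcases Nat.eq_zero_or_pos p.val with hp | hp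
      · rw [Finset.sum_eq_zero]
        · simp [hp]
        · intro q _
          rw [if_neg (by omega)]
      · obtain ⟨r, hr⟩ : ∃ r, p.val = r + 1 := ⟨p.val - 1, by omega⟩
        have hrn : r < n - 1 := by have := p.isLt; omega
        simp only [hr, Nat.add_right_cancel_iff, Finset.sum_ite_eq', Finset.mem_range, hrn]
        simp

/-- Corollary: generalized path controllability.  The graph
obtained by interconnecting `n` copies of the `k`-vertex antiregular graph
(terminal vertex of each copy joined to the degree-repeating vertex `κ̄ = ⌈k/2⌉`
of the next copy) is Laplacian controllable by a single input connected to the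
degree-repeating vertex `κ̄` of the first copy. -/
theorem interLap_controllable (k n : ℕ) (hk : 2 ≤ k) (hn : 1 ≤ n) :
    IsControllable (interLap n k hk)
      (fun q => if q = ((⟨0, hn⟩ : Fin n), (⟨(k + 1) / 2 - 1, by omega⟩ : Fin k))
        then (1 : ℝ) else 0) := by
  have hmid : (k + 1) / 2 - 1 = (k - 1) / 2 := by omega
  refine controllable_of_eig _ (interLap_symm n k hk) _ fun l y hy hb => ?_
  let Y : ℕ → ℕ → ℝ := fun p i => if h : p < n ∧ i < k then y (⟨p, h.1⟩, ⟨i, h.2⟩) else 0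
  have hY : y = fun q => Y q.1 q.2 := by
    ext ⟨p, i⟩
    simp [Y]
  let D : ℕ → ℝ := fun p =>
    if 1 ≤ p ∧ p < n then Y (p - 1) (k - 1) - Y p ((k - 1) / 2) else 0
  have hzero := chain_obs k n hk l Y D (by simp [D]) (by simp [D])
    (fun p hp => by simp [D, hp])
    (fun p hp i hi => by
      have := congrFun hy (⟨p, hp⟩, ⟨i, hi⟩)
      rw [hY, interLap_row] at this
      simpa [D, hp] using this)
    (by
      rw [hY] at hb
      simpa [dotProduct, hmid] using hb)
  rw [hY]
  ext ⟨p, i⟩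
  exact hzero p p.isLt i i.isLt
end
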